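/- Let 0 < α ≤ 3/4 and let x_*(α) = (√(1+4α) − 1)/(2α), the unique positive fixed point of T_α. Then x_*(α) is globally attractive on [−1, 1]: for every x ∈ [−1, 1], the iterates T_α^n(x) converge to x_*(α) as n → ∞. -/

import Mathlib

open Filter Topology

/-!
The map `T x = 1 - α x ^ 2` sends `[-1, 1]` into `[0, 1]` and is decreasing there, so `T ∘ T` is
increasing on `[0, 1]` and each of its orbits is monotone, hence converges to a point of period
two. The factorization
`T (T x) - x = (T x - x) * (α ^ 2 * x ^ 2 - α * x + 1 - α)`,
whose last factor has discriminant `α ^ 2 * (4 * α - 3)` in `x`, shows that for `α ≤ 3 / 4` every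
point of period two is fixed, and then the even and odd iterates have the same limit.
-/

open Function Set

theorem tendsto_of_tendsto_even_of_tendsto_odd {β : Type*} {u : ℕ → β} {l : Filter β}
    (heven : Tendsto (fun n => u (2 * n)) atTop l)
    (hodd : Tendsto (fun n => u (2 * n + 1)) atTop l) : Tendsto u atTop l := by
  intro s hs
  obtain ⟨N, hN⟩ := mem_atTop_sets.1 (heven hs)
  obtain ⟨M, hM⟩ := mem_atTop_sets.1 (hodd hs)
  refine mem_atTop_sets.2 ⟨2 * (N + M) + 1, fun n hn => ?_⟩
  obtain ⟨k, rfl | rfl⟩ := Nat.even_or_odd' n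
  · exact hN k (by lia)
  · exact hM k (by lia)

section CompactLinearOrder

variable {X : Type*} [LinearOrder X] [TopologicalSpace X] [OrderTopology X]

theorem exists_tendsto_of_monotone_of_compactSpace [CompactSpace X] {ι : Type*} [Preorder ι]
    [Nonempty ι] {u : ι → X} (hu : Monotone u) : ∃ y, Tendsto u atTop (𝓝 y) := by
  obtain ⟨y, -, hy⟩ := (isClosed_closure (s := range u)).isCompact.exists_isLUB
    (range_nonempty u).closure
  exact ⟨y, tendsto_atTop_isLUB hu
    ((isLUB_iff_of_subset_of_subset_closure subset_closure subset_rfl).2 hy)⟩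

theorem exists_tendsto_of_antitone_of_compactSpace [CompactSpace X] {ι : Type*} [Preorder ι]
    [Nonempty ι] {u : ι → X} (hu : Antitone u) : ∃ y, Tendsto u atTop (𝓝 y) :=
  haveI : CompactSpace Xᵒᵈ := ‹CompactSpace X›
  exists_tendsto_of_monotone_of_compactSpace (X := Xᵒᵈ) hu.dual_right

theorem exists_isFixedPt_tendsto_iterate_of_monotone [CompactSpace X] {f : X → X}
    (hmono : Monotone f) (hcont : Continuous f) (x : X) :
    ∃ y, IsFixedPt f y ∧ Tendsto (fun n => f^[n] x) atTop (𝓝 y) := by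
  obtain ⟨y, hy⟩ : ∃ y, Tendsto (fun n => f^[n] x) atTop (𝓝 y) := by
    rcases le_total x (f x) with hx | hx
    · exact exists_tendsto_of_monotone_of_compactSpace (hmono.monotone_iterate_of_le_map hx)
    · exact exists_tendsto_of_antitone_of_compactSpace (hmono.antitone_iterate_of_map_le hx)
  exact ⟨y, isFixedPt_of_tendsto_iterate hy hcont.continuousAt, hy⟩

theorem exists_isFixedPt_tendsto_iterate_of_antitone [CompactSpace X] {f : X → X}
    (hanti : Antitone f) (hcont : Continuous f)
    (hper : ∀ y, IsPeriodicPt f 2 y → IsFixedPt f y) (x : X) :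
    ∃ y, IsFixedPt f y ∧ Tendsto (fun n => f^[n] x) atTop (𝓝 y) := by
  obtain ⟨y, hy, heven⟩ := exists_isFixedPt_tendsto_iterate_of_monotone (f := f^[2])
    (hanti.comp hanti) (hcont.iterate 2) x
  have hfix : IsFixedPt f y := hper y hy
  simp only [← iterate_mul] at heven
  refine ⟨y, hfix, tendsto_of_tendsto_even_of_tendsto_odd heven ?_⟩
  have hodd := (hcont.tendsto y).comp heven
  rw [hfix.eq] at hodd
  simpa only [iterate_succ_apply', comp_def] using hodd

theorem exists_isFixedPt_tendsto_iterate_of_antitoneOn_Icc [CompactIccSpace X] {f : X → X}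
    {a b : X} (hmaps : MapsTo f (Icc a b) (Icc a b)) (hanti : AntitoneOn f (Icc a b))
    (hcont : ContinuousOn f (Icc a b))
    (hper : ∀ y ∈ Icc a b, IsPeriodicPt f 2 y → IsFixedPt f y) {x : X} (hx : x ∈ Icc a b) :
    ∃ y ∈ Icc a b, IsFixedPt f y ∧ Tendsto (fun n => f^[n] x) atTop (𝓝 y) := by
  obtain ⟨y, hfix, hlim⟩ := exists_isFixedPt_tendsto_iterate_of_antitone
    (f := hmaps.restrict f _ _) (fun u v huv => hanti u.2 v.2 huv) (hcont.mapsToRestrict hmaps)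
    (fun y hy => Subtype.ext <| hper y y.2 (congrArg Subtype.val hy)) ⟨x, hx⟩
  refine ⟨y, y.2, congrArg Subtype.val hfix, ?_⟩
  simpa only [hmaps.iterate_restrict, comp_def, MapsTo.val_restrict_apply] using
    (continuous_subtype_val.tendsto y).comp hlim

end CompactLinearOrder

/-- The map `T_α(x) = 1 - α x²` of the real quadratic family. -/
def quadMap (α x : ℝ) : ℝ := 1 - α * x ^ 2

namespace quadMap

variable {α x : ℝ}

theorem continuous (α : ℝ) : Continuous (quadMap α) := by
  unfold quadMap
  fun_prop

theorem mapsTo_Icc (h0 : 0 ≤ α) (h1 : α ≤ 1) : MapsTo (quadMap α) (Icc (-1) 1) (Icc 0 1) := by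
  intro x hx
  have hsq : x ^ 2 ≤ 1 := sq_le_one_iff_abs_le_one x |>.2 (abs_le.2 hx)
  exact ⟨sub_nonneg.2 (mul_le_one₀ h1 (sq_nonneg x) hsq),
    sub_le_self 1 (mul_nonneg h0 (sq_nonneg x))⟩

theorem antitoneOn_Ici (h0 : 0 ≤ α) : AntitoneOn (quadMap α) (Ici 0) := by
  intro x hx y _ hxy
  have hx0 : 0 ≤ x := hx
  unfold quadMap
  gcongr

theorem isFixedPt_iff : IsFixedPt (quadMap α) x ↔ α * x ^ 2 + x = 1 := by
  rw [IsFixedPt, quadMap, sub_eq_iff_eq_add', eq_comm]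

theorem apply_apply_sub_self (α x : ℝ) :
    quadMap α (quadMap α x) - x =
      (quadMap α x - x) * (α ^ 2 * x ^ 2 - α * x + 1 - α) := by
  unfold quadMap
  ring

theorem isFixedPt_of_isPeriodicPt_two (h1 : α ≤ 3 / 4) (hx : IsPeriodicPt (quadMap α) 2 x) :
    IsFixedPt (quadMap α) x := by
  have hprod := (apply_apply_sub_self α x).symm.trans (sub_eq_zero.2 hx)
  rcases mul_eq_zero.1 hprod with hfix | hquad
  · exact sub_eq_zero.1 hfix
  · have hsq : (2 * α * x - 1) ^ 2 = 4 * α - 3 := by linear_combination 4 * hquad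
    -- A real root forces `α = 3 / 4`, where the double root `2 / 3` is the fixed point.
    obtain rfl : α = 3 / 4 := by linarith [sq_nonneg (2 * α * x - 1)]
    have hroot : 2 * (3 / 4) * x - 1 = 0 := pow_eq_zero_iff two_ne_zero |>.1 (by linarith)
    obtain rfl : x = 2 / 3 := by linarith
    norm_num [isFixedPt_iff]

theorem eq_of_isFixedPt_of_nonneg (h0 : 0 < α) (hx0 : 0 ≤ x) (hx : IsFixedPt (quadMap α) x) :
    x = (√(1 + 4 * α) - 1) / (2 * α) := by
  have hsqrt : √(1 + 4 * α) = 2 * α * x + 1 := by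
    rw [Real.sqrt_eq_iff_eq_sq (by positivity) (by positivity)]
    linear_combination -4 * α * isFixedPt_iff.1 hx
  rw [hsqrt]
  field_simp
  ring

end quadMap

/-- For `0 < α ≤ 3/4`, the fixed point `x_*(α) = (√(1+4α) − 1)/(2α)` of
`T_α(x) = 1 − αx²` is globally attractive on `[−1, 1]`. -/
theorem fixed_point_globally_attractive (α : ℝ) (h0 : 0 < α) (h1 : α ≤ 3 / 4) :
    ∀ x ∈ Set.Icc (-1 : ℝ) 1,
      Tendsto (fun n => (fun y : ℝ => 1 - α * y ^ 2)^[n] x) atTop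
        (𝓝 ((Real.sqrt (1 + 4 * α) - 1) / (2 * α))) := by
  intro x hx
  change Tendsto (fun n => (quadMap α)^[n] x) atTop _
  have hmaps : MapsTo (quadMap α) (Icc (-1) 1) (Icc 0 1) :=
    quadMap.mapsTo_Icc h0.le (by linarith)
  obtain ⟨y, hy, hfix, hlim⟩ := exists_isFixedPt_tendsto_iterate_of_antitoneOn_Icc
    (hmaps.mono_left (Icc_subset_Icc_left (by norm_num)))
    ((quadMap.antitoneOn_Ici h0.le).mono Icc_subset_Ici_self)
    (quadMap.continuous α).continuousOn
    (fun _ _ => quadMap.isFixedPt_of_isPeriodicPt_two h1) (hmaps hx)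
  rw [← quadMap.eq_of_isFixedPt_of_nonneg h0 hy.1 hfix]
  simpa only [← iterate_succ_apply] using (tendsto_add_atTop_iff_nat 1).1 hlim
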